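/- Let α have decidable equality and let f : List α → List α be filter-equivariant. Then f maps constant lists to constant lists: for every x : α and n : ℕ there exists m : ℕ such that f (List.replicate n x) = List.replicate m x. -/

import Mathlib

/-- A function `f : List α → List α` is filter-equivariant if it commutes with
`List.filter p` for every Boolean predicate `p`. -/
def FilterEquivariant {α : Type*} (f : List α → List α) : Prop :=
  ∀ (p : α → Bool) (xs : List α), f (xs.filter p) = (f xs).filter p

namespace FilterEquivariant

variable {α : Type*} {f : List α → List α}

theorem filter_eq_self (hf : FilterEquivariant f) {p : α → Bool} {xs : List α}
    (hp : xs.filter p = xs) : (f xs).filter p = f xs := by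
  rw [← hf, hp]

theorem subset (hf : FilterEquivariant f) (xs : List α) : f xs ⊆ xs := by
  classical
  have filter_mem_self : xs.filter (· ∈ xs) = xs :=
    List.filter_eq_self.mpr fun _ ha => decide_eq_true ha
  intro a ha
  exact of_decide_eq_true (List.filter_eq_self.mp (hf.filter_eq_self filter_mem_self) a ha)

end FilterEquivariant

theorem filterEquivariant_replicate {α : Type*} [DecidableEq α]
    (f : List α → List α) (hf : FilterEquivariant f) (x : α) (n : ℕ) :
    ∃ m : ℕ, f (List.replicate n x) = List.replicate m x :=
  List.subset_singleton_iff.mp <|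
    List.Subset.trans (hf.subset _) (List.replicate_subset_singleton n x)
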